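/- Let 𝒳 be a measurable space equipped with a probability measure μ (the law of the input X), let 𝒴 be a finite type, and let q : 𝒳 → (𝒴 → ℝ) be a fixed and known conditional probability distribution p_{Y|X}, i.e. q x is a pmf on 𝒴 for every x ∈ 𝒳 and x ↦ q x y is measurable for each y. Let H(Y) = H(y ↦ ∫ q x y dμ(x)) be the true entropy of the output Y, and for a sample vector v : Fin N → 𝒳 let Ĥ(v) = H(y ↦ (1/N) * ∑_i q (v i) y) be the empirical entropy estimate. Then for any natural number N ≥ 2 and any δ ∈ (0, 1), with probability at least 1 − δ over v drawn from the N-fold product measure μ^{⊗N}, one has |H(Y) − Ĥ(v)| ≤ (card 𝒴) * Real.log N * Real.sqrt (Real.log (2/δ)) / Real.sqrt (2 * N) + (card 𝒴 − 1) / N. -/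

import Mathlib

open MeasureTheory

/-!
The error is a fluctuation of the empirical entropy around its mean plus the bias of that mean.

Replacing one sample point moves the empirical law by at most `1 / N` in total variation. By the
Audenaert–Fannes inequality the entropy then moves by at most `h (1 / N) + log (K - 1) / N`, where
`h` is the binary entropy and `K = card 𝒴`; this is at most `K * log N / N`. McDiarmid's inequality
turns this sensitivity into the fluctuation term.

For the bias, `-x * log x` is concave and lies above `-x * log p + x - x ^ 2 / p`. Hence an average
`Z` of mean `p` satisfies `0 ≤ -p * log p - E[-Z * log Z] ≤ Var Z / p ≤ (1 - p) / N`, and the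
masses `p` of the `K` letters add up to `1`.
-/

open ProbabilityTheory Real
open scoped NNReal

section Entropy

variable {ι : Type*}

lemma sum_mul_log_div_le {s : Finset ι} {a b : ι → ℝ} (ha : ∀ i ∈ s, 0 ≤ a i)
    (hb : ∀ i ∈ s, 0 ≤ b i) (hab : ∀ i ∈ s, b i = 0 → a i = 0) :
    ∑ i ∈ s, a i * log (b i / a i) ≤ (∑ i ∈ s, a i) * log ((∑ i ∈ s, b i) / ∑ i ∈ s, a i) := by
  set A := ∑ i ∈ s, a i with hA
  set B := ∑ i ∈ s, b i with hB
  rcases (show 0 ≤ A from Finset.sum_nonneg ha).eq_or_lt with hA0 | hA0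
  · have ha0 : ∀ i ∈ s, a i = 0 := (Finset.sum_eq_zero_iff_of_nonneg ha).1 hA0.symm
    rw [← hA0, Finset.sum_congr rfl fun i hi => by rw [ha0 i hi, zero_mul]]
    simp
  obtain ⟨j, hj, haj⟩ := Finset.exists_lt_of_sum_lt (s := s) (f := fun _ => (0 : ℝ)) (g := a)
    (by simpa using hA0)
  have hB0 : 0 < B :=
    Finset.sum_pos' hb ⟨j, hj, (hb j hj).lt_of_ne' fun h => haj.ne' (hab j hj h)⟩
  have term_le : ∀ i ∈ s, a i * log (b i / a i) ≤ a i * log (B / A) + (b i * (A / B) - a i) := by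
    intro i hi
    rcases (ha i hi).eq_or_lt with hai | hai
    · rw [← hai]
      have := hb i hi
      simp only [zero_mul, sub_zero, zero_add]
      positivity
    have hbi : 0 < b i := (hb i hi).lt_of_ne' fun h => hai.ne' (hab i hi h)
    have hlog : log (b i / a i) = log (B / A) + log (b i / a i * (A / B)) := by
      rw [← log_mul (by positivity) (by positivity)]
      congr 1
      field_simp
    calc a i * log (b i / a i)
        ≤ a i * (log (B / A) + (b i / a i * (A / B) - 1)) := by
          rw [hlog]
          gcongr
          exact log_le_sub_one_of_pos (by positivity)
      _ = a i * log (B / A) + (b i * (A / B) - a i) := by field_simp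
  calc ∑ i ∈ s, a i * log (b i / a i)
      ≤ ∑ i ∈ s, (a i * log (B / A) + (b i * (A / B) - a i)) := Finset.sum_le_sum term_le
    _ = A * log (B / A) := by
      rw [Finset.sum_add_distrib, Finset.sum_sub_distrib, ← Finset.sum_mul, ← Finset.sum_mul,
        ← hA, ← hB, mul_div_cancel₀ _ hB0.ne', sub_self, add_zero]

lemma negMulLog_add_le {x y : ℝ} (hx : 0 ≤ x) (hy : 0 ≤ y) :
    negMulLog (x + y) ≤ negMulLog x + negMulLog y := by
  rcases hx.eq_or_lt with rfl | hx
  · simp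
  rcases hy.eq_or_lt with rfl | hy
  · simp
  have hlogx : x * log x ≤ x * log (x + y) := by gcongr; linarith
  have hlogy : y * log y ≤ y * log (x + y) := by gcongr; linarith
  simp only [negMulLog]
  linarith

lemma sum_negMulLog_le {s : Finset ι} {a : ι → ℝ} (ha : ∀ i ∈ s, 0 ≤ a i) :
    ∑ i ∈ s, negMulLog (a i) ≤ (∑ i ∈ s, a i) * log s.card + negMulLog (∑ i ∈ s, a i) := by
  rcases s.eq_empty_or_nonempty with rfl | hs
  · simp
  have hlogsum := sum_mul_log_div_le (b := fun _ => 1) ha (by simp) (by simp)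
  rcases eq_or_ne (∑ i ∈ s, a i) 0 with hA | hA
  · simpa [hA, negMulLog] using hlogsum
  rw [Finset.sum_const, nsmul_one, log_div (by simpa using hs.ne_empty) hA, mul_sub] at hlogsum
  simp only [one_div, log_inv, mul_neg] at hlogsum
  simp only [negMulLog, neg_mul]
  linarith

lemma sum_negMulLog_sub_sum_negMulLog_le [Fintype ι] {p r : ι → ℝ} (hp : p ∈ stdSimplex ℝ ι)
    (hr : ∀ i, 0 ≤ r i) (hrp : ∀ i, r i ≤ p i) :
    ∑ i, negMulLog (r i) - ∑ i, negMulLog (p i) ≤ negMulLog (∑ i, r i) := by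
  have term_le : ∀ i, negMulLog (r i) - negMulLog (p i) ≤ r i * log (p i / r i) := by
    intro i
    rcases (hr i).eq_or_lt with hri | hri
    · simpa [← hri] using negMulLog_nonneg (hp.1 i) (mem_Icc_of_mem_stdSimplex hp i).2
    have hpi : 0 < p i := hri.trans_le (hrp i)
    have hlog : (p i - r i) * log (p i) ≤ 0 :=
      mul_nonpos_of_nonneg_of_nonpos (sub_nonneg.2 (hrp i))
        (log_nonpos hpi.le (mem_Icc_of_mem_stdSimplex hp i).2)
    rw [log_div hpi.ne' hri.ne']
    simp only [negMulLog]
    linarith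
  calc ∑ i, negMulLog (r i) - ∑ i, negMulLog (p i)
      ≤ ∑ i, r i * log (p i / r i) := by
        rw [← Finset.sum_sub_distrib]
        exact Finset.sum_le_sum fun i _ => term_le i
    _ ≤ (∑ i, r i) * log ((∑ i, p i) / ∑ i, r i) :=
        sum_mul_log_div_le (fun i _ => hr i) (fun i _ => hp.1 i)
          fun i _ hpi => le_antisymm (hpi ▸ hrp i) (hr i)
    _ = negMulLog (∑ i, r i) := by simp [hp.2, negMulLog]

variable [Fintype ι]

/-- The Shannon entropy of a probability mass function on a finite type, in nats. The convention
`0 * log 0 = 0` is built into `Real.negMulLog`. -/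
noncomputable def shannonEntropy (p : ι → ℝ) : ℝ := ∑ i, negMulLog (p i)

/-- The total variation distance between probability mass functions on a finite type, measuring how
far one sample point moves the empirical law. It is encoded by the total excess of `p` over `q`,
which is half of the `ℓ¹` distance when `p` and `q` have the same total mass. -/
noncomputable def tvDist (p q : ι → ℝ) : ℝ := ∑ i, (p i - q i)⁺

variable {p q : ι → ℝ}

lemma tvDist_nonneg (p q : ι → ℝ) : 0 ≤ tvDist p q :=
  Finset.sum_nonneg fun _ _ => posPart_nonneg _

lemma tvDist_comm (hpq : ∑ i, p i = ∑ i, q i) : tvDist p q = tvDist q p := by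
  have hsub : tvDist p q - tvDist q p = ∑ i, (p i - q i) := by
    simp_rw [tvDist, ← Finset.sum_sub_distrib, ← neg_sub (p _) (q _), posPart_neg,
      posPart_sub_negPart]
  rwa [Finset.sum_sub_distrib, hpq, sub_self, sub_eq_zero] at hsub

lemma shannonEntropy_sub_le_qaryEntropy (hp : p ∈ stdSimplex ℝ ι) (hq : q ∈ stdSimplex ℝ ι) :
    shannonEntropy p - shannonEntropy q ≤ qaryEntropy (Fintype.card ι) (tvDist p q) := by
  classical
  -- Split `p` into its common part with `q` and the excess over `q`. The excess vanishes at some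
  -- letter `j`, which leaves at most `card ι - 1` letters in its support.
  have excess_add : ∀ i, (p i - q i)⁺ + min (p i) (q i) = p i := by grind [posPart_def]
  have common_nonneg : ∀ i, 0 ≤ min (p i) (q i) := fun i => le_min (hp.1 i) (hq.1 i)
  have sum_common : ∑ i, min (p i) (q i) = 1 - tvDist p q := by
    rw [eq_sub_iff_add_eq', tvDist, ← Finset.sum_add_distrib, ← hp.2]
    exact Finset.sum_congr rfl fun i _ => excess_add i
  obtain ⟨j, -, hj⟩ : ∃ j ∈ Finset.univ, p j ≤ q j :=
    Finset.exists_le_of_sum_le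
      (Finset.nonempty_of_sum_ne_zero (hp.2.trans_ne one_ne_zero)) (hp.2.trans hq.2.symm).le
  have excess_j : (p j - q j)⁺ = 0 := posPart_eq_zero.2 (sub_nonpos.2 hj)
  have sum_excess : ∑ i, negMulLog (p i - q i)⁺ ≤
      tvDist p q * log (Fintype.card ι - 1 : ℤ) + negMulLog (tvDist p q) := by
    have hle := sum_negMulLog_le (s := Finset.univ.erase j) (a := fun i => (p i - q i)⁺)
      fun i _ => posPart_nonneg _
    rw [Finset.sum_erase (f := fun i => (p i - q i)⁺) _ excess_j,
      Finset.sum_erase (f := fun i => negMulLog (p i - q i)⁺) _ (by simp [excess_j]),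
      Finset.card_erase_of_mem (Finset.mem_univ j), Finset.card_univ,
      Nat.cast_pred (Fintype.card_pos_iff.2 ⟨j⟩)] at hle
    exact_mod_cast hle
  calc shannonEntropy p - shannonEntropy q
      ≤ ∑ i, negMulLog (p i - q i)⁺ + (∑ i, negMulLog (min (p i) (q i)) - shannonEntropy q) := by
        rw [← add_sub_assoc, ← Finset.sum_add_distrib]
        refine sub_le_sub_right (Finset.sum_le_sum fun i _ => ?_) _
        conv_lhs => rw [← excess_add i]
        exact negMulLog_add_le (posPart_nonneg _) (common_nonneg i)
    _ ≤ tvDist p q * log (Fintype.card ι - 1 : ℤ) + negMulLog (tvDist p q) +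
          negMulLog (1 - tvDist p q) := by
        rw [← sum_common]
        exact add_le_add sum_excess
          (sum_negMulLog_sub_sum_negMulLog_le hq common_nonneg fun i => min_le_right _ _)
    _ = qaryEntropy (Fintype.card ι) (tvDist p q) := by
        rw [qaryEntropy, binEntropy_eq_negMulLog_add_negMulLog_one_sub, add_assoc]

theorem abs_shannonEntropy_sub_le_qaryEntropy (hp : p ∈ stdSimplex ℝ ι)
    (hq : q ∈ stdSimplex ℝ ι) :
    |shannonEntropy p - shannonEntropy q| ≤ qaryEntropy (Fintype.card ι) (tvDist p q) := by
  refine abs_sub_le_iff.2 ⟨shannonEntropy_sub_le_qaryEntropy hp hq, ?_⟩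
  rw [tvDist_comm (hp.2.trans hq.2.symm)]
  exact shannonEntropy_sub_le_qaryEntropy hq hp

lemma mul_log_succ_div_le_log_succ (m : ℕ) : m * log ((m + 1) / m) ≤ log (m + 1) := by
  rcases lt_or_ge m 2 with hm | hm
  · interval_cases m <;> norm_num
  have hm' : (2 : ℝ) ≤ m := mod_cast hm
  calc m * log ((m + 1) / m) ≤ m * ((m + 1) / m - 1) := by
        gcongr
        exact log_le_sub_one_of_pos (by positivity)
    _ = 1 := by field_simp; ring
    _ ≤ log (m + 1) := by
        rw [le_log_iff_exp_le (by positivity)]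
        linarith [exp_one_lt_three]

lemma binEntropy_inv_le {n : ℕ} (hn : n ≠ 0) : binEntropy (n : ℝ)⁻¹ ≤ 2 * log n / n := by
  obtain ⟨m, rfl⟩ := Nat.exists_eq_succ_of_ne_zero hn
  have hcompl : 1 - ((m + 1 : ℕ) : ℝ)⁻¹ = m / (m + 1) := by push_cast; field_simp; ring
  rw [binEntropy, hcompl, inv_inv, inv_div, le_div_iff₀ (by positivity)]
  have := mul_log_succ_div_le_log_succ m
  push_cast
  field_simp
  linarith

lemma qaryEntropy_inv_le {k n : ℕ} (hk : 2 ≤ k) (hn : 2 ≤ n) :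
    qaryEntropy k (n : ℝ)⁻¹ ≤ k * log n / n := by
  have hlog : log (k - 1 : ℤ) ≤ (k - 2) * log n := by
    obtain ⟨j, rfl⟩ := Nat.exists_eq_add_of_le' hk
    have hpow : j + 1 ≤ n ^ j := Nat.lt_two_pow_self.trans_le (Nat.pow_le_pow_left hn j)
    have hpow' : (j : ℝ) + 1 ≤ n ^ j := mod_cast hpow
    calc log ((j + 2 : ℕ) - 1 : ℤ) = log (j + 1) := by congr 1; push_cast; ring
      _ ≤ log ((n : ℝ) ^ j) := log_le_log (by positivity) hpow'
      _ = ((j + 2 : ℕ) - 2) * log n := by rw [log_pow]; push_cast; ring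
  calc qaryEntropy k (n : ℝ)⁻¹ ≤ (n : ℝ)⁻¹ * ((k - 2) * log n) + 2 * log n / n := by
        rw [qaryEntropy]
        gcongr
        exact binEntropy_inv_le (by lia)
    _ = k * log n / n := by ring

lemma abs_shannonEntropy_sub_le_card_mul_log_div (hp : p ∈ stdSimplex ℝ ι)
    (hq : q ∈ stdSimplex ℝ ι) {n : ℕ} (hn : 2 ≤ n) (hpq : tvDist p q ≤ (n : ℝ)⁻¹) :
    |shannonEntropy p - shannonEntropy q| ≤ Fintype.card ι * log n / n := by
  have hn' : (2 : ℝ) ≤ n := mod_cast hn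
  rcases subsingleton_or_nontrivial ι with _ | _
  · have hpq' : p = q := by
      ext i
      simpa using (Fintype.sum_subsingleton p i).symm.trans
        (hp.2.trans (hq.2.symm.trans (Fintype.sum_subsingleton q i)))
    rw [hpq', sub_self, abs_zero]
    positivity
  have hk : 2 ≤ Fintype.card ι := Fintype.one_lt_card
  have inv_mem : (n : ℝ)⁻¹ ∈ Set.Icc (0 : ℝ) (1 - 1 / Fintype.card ι) := by
    have hn_inv : (n : ℝ)⁻¹ ≤ 2⁻¹ := by gcongr
    have hk_inv : 1 / (Fintype.card ι : ℝ) ≤ 1 / 2 := by gcongr; exact_mod_cast hk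
    exact ⟨by positivity, by linarith⟩
  calc |shannonEntropy p - shannonEntropy q|
      ≤ qaryEntropy (Fintype.card ι) (tvDist p q) := abs_shannonEntropy_sub_le_qaryEntropy hp hq
    _ ≤ qaryEntropy (Fintype.card ι) (n : ℝ)⁻¹ :=
        (qaryEntropy_strictMonoOn hk).monotoneOn ⟨tvDist_nonneg p q, hpq.trans inv_mem.2⟩
          inv_mem hpq
    _ ≤ Fintype.card ι * log n / n := qaryEntropy_inv_le hk hn

end Entropy

section Subgaussian

variable {Ω Ω' : Type*} {mΩ : MeasurableSpace Ω} {mΩ' : MeasurableSpace Ω'}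
  {μ : Measure Ω} {ν : Measure Ω'}

lemma hasSubgaussianMGF_of_forall_sub_le [IsProbabilityMeasure μ] {X : Ω → ℝ} {c : ℝ≥0}
    (hX : AEMeasurable X μ) (hc : ∀ ω ω', X ω - X ω' ≤ c) :
    HasSubgaussianMGF (fun ω => X ω - μ[X]) ((c / 2) ^ 2) μ := by
  have : Nonempty Ω := nonempty_of_isProbabilityMeasure μ
  have hbdd : BddBelow (Set.range X) := by
    inhabit Ω
    exact ⟨X default - c, Set.forall_mem_range.2 fun ω => by linarith [hc default ω]⟩
  have mem_Icc : ∀ ω, X ω ∈ Set.Icc (⨅ ω', X ω') ((⨅ ω', X ω') + c) := fun ω =>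
    ⟨ciInf_le hbdd ω, sub_le_iff_le_add.1 (le_ciInf fun ω' => by linarith [hc ω ω'])⟩
  simpa using hasSubgaussianMGF_of_mem_Icc hX (ae_of_all _ mem_Icc)

lemma integrable_exp_mul_of_hasSubgaussianMGF_sub {X : Ω → ℝ} {a : ℝ} {c : ℝ≥0}
    (hX : HasSubgaussianMGF (fun ω => X ω - a) c μ) (t : ℝ) :
    Integrable (fun ω => exp (t * X ω)) μ := by
  simpa [← exp_add, ← mul_add] using (hX.integrable_exp_mul t).const_mul (exp (t * a))

lemma mgf_le_of_hasSubgaussianMGF_sub {X : Ω → ℝ} {a : ℝ} {c : ℝ≥0}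
    (hX : HasSubgaussianMGF (fun ω => X ω - a) c μ) (t : ℝ) :
    mgf X μ t ≤ exp (t * a) * exp (c * t ^ 2 / 2) := by
  have hmgf : mgf X μ t = exp (t * a) * mgf (fun ω => X ω - a) μ t := by
    simp [mgf, ← integral_const_mul, ← exp_add, ← mul_add]
  rw [hmgf]
  gcongr
  exact hX.mgf_le t

lemma hasSubgaussianMGF_prod [SFinite μ] [SFinite ν] {X : Ω × Ω' → ℝ} {Y : Ω → ℝ} {c d : ℝ≥0}
    (hX : AEStronglyMeasurable X (μ.prod ν)) (hY : HasSubgaussianMGF Y c μ)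
    (hXY : ∀ᵐ ω ∂μ, HasSubgaussianMGF (fun ω' => X (ω, ω') - Y ω) d ν) :
    HasSubgaussianMGF X (c + d) (μ.prod ν) := by
  have hmeas : ∀ t, AEStronglyMeasurable (fun z => exp (t * X z)) (μ.prod ν) := fun t =>
    continuous_exp.comp_aestronglyMeasurable (hX.const_mul t)
  have hbound : ∀ t, ∀ᵐ ω ∂μ,
      ∫ ω', exp (t * X (ω, ω')) ∂ν ≤ exp (t * Y ω) * exp (d * t ^ 2 / 2) := fun t =>
    hXY.mono fun ω h => mgf_le_of_hasSubgaussianMGF_sub h t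
  have hdom : ∀ t, Integrable (fun ω => exp (t * Y ω) * exp (d * t ^ 2 / 2)) μ := fun t =>
    (hY.integrable_exp_mul t).mul_const _
  have hsection : ∀ t, Integrable (fun ω => ∫ ω', exp (t * X (ω, ω')) ∂ν) μ := fun t =>
    (hdom t).mono' (hmeas t).integral_prod_right' <| (hbound t).mono fun ω h => by
      rwa [norm_of_nonneg (integral_nonneg fun _ => (exp_pos _).le)]
  have hint : ∀ t, Integrable (fun z => exp (t * X z)) (μ.prod ν) := fun t =>
    (integrable_prod_iff (hmeas t)).2
      ⟨hXY.mono fun ω h => integrable_exp_mul_of_hasSubgaussianMGF_sub h t,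
        by simpa only [norm_of_nonneg (exp_pos _).le] using hsection t⟩
  refine ⟨hint, fun t => ?_⟩
  calc mgf X (μ.prod ν) t = ∫ ω, ∫ ω', exp (t * X (ω, ω')) ∂ν ∂μ := integral_prod _ (hint t)
    _ ≤ ∫ ω, exp (t * Y ω) * exp (d * t ^ 2 / 2) ∂μ :=
        integral_mono_ae (hsection t) (hdom t) (hbound t)
    _ = mgf Y μ t * exp (d * t ^ 2 / 2) := integral_mul_const _ _
    _ ≤ exp (c * t ^ 2 / 2) * exp (d * t ^ 2 / 2) := by gcongr; exact hY.mgf_le t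
    _ = exp ((c + d : ℝ≥0) * t ^ 2 / 2) := by rw [← exp_add]; push_cast; ring_nf

lemma hasSubgaussianMGF_prod_of_forall_sub_le [IsProbabilityMeasure μ] [IsProbabilityMeasure ν]
    {X : Ω × Ω' → ℝ} {c d : ℝ≥0} (hX : Measurable X)
    (hc : ∀ ω₁ ω₂ ω', X (ω₁, ω') - X (ω₂, ω') ≤ c)
    (hd : ∀ ω, HasSubgaussianMGF (fun ω' => X (ω, ω') - ∫ ω'', X (ω, ω'') ∂ν) d ν) :
    HasSubgaussianMGF (fun z => X z - (μ.prod ν)[X]) ((c / 2) ^ 2 + d) (μ.prod ν) := by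
  let Y : Ω → ℝ := fun ω => ∫ ω', X (ω, ω') ∂ν
  have integrable_section : ∀ ω, Integrable (fun ω' => X (ω, ω')) ν := fun ω =>
    ((hd ω).integrable.add (integrable_const (Y ω))).congr (ae_of_all _ fun _ => by simp [Y])
  have hY : HasSubgaussianMGF (fun ω => Y ω - μ[Y]) ((c / 2) ^ 2) μ := by
    refine hasSubgaussianMGF_of_forall_sub_le
      hX.stronglyMeasurable.integral_prod_right'.measurable.aemeasurable fun ω₁ ω₂ => ?_
    calc Y ω₁ - Y ω₂ = ∫ ω', X (ω₁, ω') - X (ω₂, ω') ∂ν :=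
          (integral_sub (integrable_section ω₁) (integrable_section ω₂)).symm
      _ ≤ ∫ _, (c : ℝ) ∂ν := integral_mono
          ((integrable_section ω₁).sub (integrable_section ω₂)) (integrable_const _) (hc ω₁ ω₂)
      _ = c := by simp
  have hXY : HasSubgaussianMGF (fun z => X z - μ[Y]) ((c / 2) ^ 2 + d) (μ.prod ν) :=
    hasSubgaussianMGF_prod (hX.sub_const _).aestronglyMeasurable hY <|
      ae_of_all _ fun ω => by simpa only [sub_sub_sub_cancel_right] using hd ω
  have integrable_X : Integrable X (μ.prod ν) :=
    (hXY.integrable.add (integrable_const μ[Y])).congr (ae_of_all _ fun _ => by simp)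
  rwa [integral_prod X integrable_X]

lemma hasSubgaussianMGF_of_measurePreserving {e : Ω ≃ᵐ Ω'} (he : MeasurePreserving e μ ν)
    {X : Ω → ℝ} {c : ℝ≥0}
    (hX : HasSubgaussianMGF (fun ω' => X (e.symm ω') - ν[X ∘ e.symm]) c ν) :
    HasSubgaussianMGF (fun ω => X ω - μ[X]) c μ := by
  rw [← he.map_eq] at hX
  have hmean : (μ.map e)[X ∘ e.symm] = μ[X] := by simp [integral_map_equiv]
  rw [hmean] at hX
  simpa [Function.comp_def] using HasSubgaussianMGF.of_map he.measurable.aemeasurable hX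

lemma measureReal_le_abs_le {X : Ω → ℝ} {c : ℝ≥0} (hX : HasSubgaussianMGF X c μ) {ε : ℝ}
    (hε : 0 ≤ ε) : μ.real {ω | ε ≤ |X ω|} ≤ 2 * exp (-ε ^ 2 / (2 * c)) := by
  have hunion : {ω | ε ≤ |X ω|} = {ω | ε ≤ X ω} ∪ {ω | ε ≤ (-X) ω} := by
    ext ω
    simp [le_abs]
  rw [hunion, two_mul]
  exact (measureReal_union_le _ _).trans
    (add_le_add (hX.measure_ge_le hε) (hX.neg.measure_ge_le hε))

theorem one_sub_le_measureReal_abs_le [IsProbabilityMeasure μ] {X : Ω → ℝ} {c : ℝ≥0}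
    (hX : HasSubgaussianMGF X c μ) {δ : ℝ} (hδ : δ ∈ Set.Ioc (0 : ℝ) 2) :
    1 - δ ≤ μ.real {ω | |X ω| ≤ √(2 * c * log (2 / δ))} := by
  obtain ⟨hδ0, hδ2⟩ := hδ
  rcases eq_or_ne c 0 with rfl | hc
  · have hfull : {ω | |X ω| ≤ √(2 * (0 : ℝ≥0) * log (2 / δ))} =ᵐ[μ] Set.univ :=
      Filter.eventuallyEq_univ.2 <|
        hX.ae_eq_zero_of_hasSubgaussianMGF_zero.mono fun ω hω => by simp [hω]
    rw [measureReal_congr hfull]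
    simp [hδ0.le]
  have hlog : 0 ≤ log (2 / δ) := log_nonneg ((one_le_div hδ0).2 hδ2)
  have htail : μ.real {ω | √(2 * c * log (2 / δ)) ≤ |X ω|} ≤ δ := by
    refine (measureReal_le_abs_le hX (sqrt_nonneg _)).trans_eq ?_
    have hexponent : -√(2 * c * log (2 / δ)) ^ 2 / (2 * c) = -log (2 / δ) := by
      rw [sq_sqrt (by positivity)]
      field_simp
    rw [hexponent, exp_neg, exp_log (by positivity)]
    field_simp
  have hmeas : NullMeasurableSet {ω | √(2 * c * log (2 / δ)) ≤ |X ω|} μ :=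
    nullMeasurableSet_le aemeasurable_const hX.aemeasurable.abs
  calc 1 - δ ≤ μ.real {ω | √(2 * c * log (2 / δ)) ≤ |X ω|}ᶜ := by
        rw [probReal_compl_eq_one_sub₀ hmeas]
        linarith
    _ ≤ μ.real {ω | |X ω| ≤ √(2 * c * log (2 / δ))} :=
        measureReal_mono fun ω (hω : ¬_ ≤ |X ω|) => (not_le.1 hω).le

end Subgaussian

section McDiarmid

variable {ι : Type*} {Ω : ι → Type*} {f : (∀ i, Ω i) → ℝ} {c : ι → ℝ≥0}

/-- The bounded differences property, the hypothesis of McDiarmid's inequality: changing the `i`-th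
argument alone changes `f` by at most `c i`. -/
def HasBoundedDifferences (f : (∀ i, Ω i) → ℝ) (c : ι → ℝ≥0) : Prop :=
  ∀ i v w, (∀ j, j ≠ i → v j = w j) → |f v - f w| ≤ c i

namespace HasBoundedDifferences

lemma comp_insertNth {n : ℕ} {Ω : Fin (n + 1) → Type*} {f : (∀ i, Ω i) → ℝ}
    {c : Fin (n + 1) → ℝ≥0} (hf : HasBoundedDifferences f c) (k : Fin (n + 1)) (x : Ω k) :
    HasBoundedDifferences (fun w => f (k.insertNth x w)) fun j => c (k.succAbove j) :=
  fun i _ _ hvw => hf _ _ _ <| (Fin.forall_iff_succAbove k).2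
    ⟨fun _ => by simp, fun j hj => by simpa using hvw j (by simpa using hj)⟩

lemma abs_insertNth_sub_insertNth_le {n : ℕ} {Ω : Fin (n + 1) → Type*} {f : (∀ i, Ω i) → ℝ}
    {c : Fin (n + 1) → ℝ≥0} (hf : HasBoundedDifferences f c) (k : Fin (n + 1)) (x x' : Ω k)
    (w : ∀ j, Ω (k.succAbove j)) : |f (k.insertNth x w) - f (k.insertNth x' w)| ≤ c k :=
  hf k _ _ <| (Fin.forall_iff_succAbove k).2 ⟨fun h => (h rfl).elim, fun j _ => by simp⟩

lemma hasSubgaussianMGF_fin {n : ℕ} {Ω : Fin n → Type*} [∀ i, MeasurableSpace (Ω i)]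
    (μ : ∀ i, Measure (Ω i)) [∀ i, IsProbabilityMeasure (μ i)] {f : (∀ i, Ω i) → ℝ}
    {c : Fin n → ℝ≥0} (hf : HasBoundedDifferences f c) (hfm : Measurable f) :
    HasSubgaussianMGF (fun v => f v - (Measure.pi μ)[f]) (∑ i, (c i / 2) ^ 2) (Measure.pi μ) := by
  induction n with
  | zero =>
    have hconst : ∀ v, f v = f default := fun v => congrArg f (Subsingleton.elim v _)
    simp [hconst]
  | succ n ih =>
    rw [Fin.sum_univ_succAbove _ 0]
    have hfm' := hfm.comp (MeasurableEquiv.piFinSuccAbove Ω 0).symm.measurable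
    exact hasSubgaussianMGF_of_measurePreserving (measurePreserving_piFinSuccAbove μ 0) <|
      hasSubgaussianMGF_prod_of_forall_sub_le hfm'
        (fun x x' w => (le_abs_self _).trans (hf.abs_insertNth_sub_insertNth_le 0 x x' w))
        fun x => ih _ (hf.comp_insertNth 0 x) (hfm'.comp measurable_prodMk_left)

theorem hasSubgaussianMGF [Fintype ι] [∀ i, MeasurableSpace (Ω i)] (μ : ∀ i, Measure (Ω i))
    [∀ i, IsProbabilityMeasure (μ i)] (hf : HasBoundedDifferences f c) (hfm : Measurable f) :
    HasSubgaussianMGF (fun v => f v - (Measure.pi μ)[f]) (∑ i, (c i / 2) ^ 2) (Measure.pi μ) := by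
  let e := (Fintype.equivFin ι).symm
  let E := MeasurableEquiv.piCongrLeft Ω e
  have hfE : HasBoundedDifferences (f ∘ E) (c ∘ e) := fun i v w hvw =>
    hf (e i) _ _ <| e.forall_congr_right.1 fun j hj => by
      simpa only [E, MeasurableEquiv.piCongrLeft_apply_apply] using hvw j (ne_of_apply_ne e hj)
  rw [← e.sum_comp]
  exact hasSubgaussianMGF_of_measurePreserving (measurePreserving_piCongrLeft μ e).symm <|
    hfE.hasSubgaussianMGF_fin (fun j => μ (e j)) (hfm.comp E.measurable)

end HasBoundedDifferences

end McDiarmid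

section Bias

lemma sub_le_negMulLog {p z : ℝ} (hp : 0 < p) (hz : 0 ≤ z) :
    -z * log p - (z ^ 2 / p - z) ≤ negMulLog z := by
  rcases hz.eq_or_lt with rfl | hz
  · simp
  have hlog : z * log (z / p) ≤ z * (z / p - 1) := by
    gcongr
    exact log_le_sub_one_of_pos (by positivity)
  rw [log_div hz.ne' hp.ne'] at hlog
  simp only [negMulLog]
  linarith [show z * (z / p - 1) = z ^ 2 / p - z by ring]

variable {Ω : Type*} {mΩ : MeasurableSpace Ω} {μ : Measure Ω} {Z : Ω → ℝ}

lemma integrable_negMulLog [IsFiniteMeasure μ] (hZ : MemLp Z 2 μ) (hZ0 : 0 ≤ᵐ[μ] Z) :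
    Integrable (fun ω => negMulLog (Z ω)) μ := by
  have hZint : Integrable Z μ := hZ.integrable one_le_two
  refine integrable_of_le_of_le (continuous_negMulLog.comp_aestronglyMeasurable hZ.1)
    (hZ0.mono fun ω hω => sub_le_negMulLog one_pos hω)
    (hZ0.mono fun ω hω => negMulLog_le_one_sub_self hω) ?_ ((integrable_const 1).sub hZint)
  simpa [Pi.sub_def] using hZint.sub hZ.integrable_sq

variable [IsProbabilityMeasure μ]

lemma integral_negMulLog_le_negMulLog_integral (hZ : MemLp Z 2 μ) (hZ0 : 0 ≤ᵐ[μ] Z) :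
    ∫ ω, negMulLog (Z ω) ∂μ ≤ negMulLog μ[Z] :=
  concaveOn_negMulLog.le_map_integral continuous_negMulLog.continuousOn isClosed_Ici hZ0
    (hZ.integrable one_le_two) (integrable_negMulLog hZ hZ0)

-- When `μ[Z] = 0`, both sides vanish, the right one as a division by zero.
lemma negMulLog_integral_sub_integral_negMulLog_le (hZ : MemLp Z 2 μ) (hZ0 : 0 ≤ᵐ[μ] Z) :
    negMulLog μ[Z] - ∫ ω, negMulLog (Z ω) ∂μ ≤ Var[Z; μ] / μ[Z] := by
  have hZint : Integrable Z μ := hZ.integrable one_le_two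
  rcases (integral_nonneg_of_ae hZ0).eq_or_lt with hmean | hmean
  · have hZ_zero : Z =ᵐ[μ] 0 := (integral_eq_zero_iff_of_nonneg_ae hZ0 hZint).1 hmean.symm
    have hentropy : ∫ ω, negMulLog (Z ω) ∂μ = 0 :=
      integral_eq_zero_of_ae (hZ_zero.mono fun ω hω => by simp [hω])
    simp [hentropy, ← hmean]
  have linear_integrable : Integrable (fun ω => -Z ω * log μ[Z]) μ := hZint.neg.mul_const _
  have quad_integrable : Integrable (fun ω => Z ω ^ 2 / μ[Z]) μ := hZ.integrable_sq.div_const _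
  have lower_integral : ∫ ω, (-Z ω * log μ[Z] - (Z ω ^ 2 / μ[Z] - Z ω)) ∂μ =
      negMulLog μ[Z] - Var[Z; μ] / μ[Z] := by
    rw [integral_sub linear_integrable (quad_integrable.sub' hZint),
      integral_sub quad_integrable hZint, integral_mul_const, integral_neg,
      integral_div, variance_eq_sub hZ, negMulLog]
    simp only [Pi.pow_apply]
    field_simp
  rw [sub_le_comm, ← lower_integral]
  exact integral_mono_ae (linear_integrable.sub (quad_integrable.sub hZint))
    (integrable_negMulLog hZ hZ0) (hZ0.mono fun ω hω => sub_le_negMulLog hmean hω)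

end Bias

section SampleMean

variable {ι 𝒳 : Type*} [Fintype ι] [MeasurableSpace 𝒳] {μ : Measure 𝒳} [IsProbabilityMeasure μ]
  {f : 𝒳 → ℝ}

/-- The sample mean, the average of `f` over the sample points `v i`; it is `0` for the empty
sample. -/
noncomputable def sampleMean (f : 𝒳 → ℝ) (v : ι → 𝒳) : ℝ := (Fintype.card ι : ℝ)⁻¹ * ∑ i, f (v i)

lemma measurable_sampleMean (hf : Measurable f) : Measurable (sampleMean (ι := ι) f) := by
  unfold sampleMean
  fun_prop

lemma memLp_sampleMean {r : ENNReal} (hf : MemLp f r μ) :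
    MemLp (sampleMean f) r (Measure.pi fun _ : ι => μ) :=
  (memLp_finsetSum _ fun i _ => hf.comp_measurePreserving (measurePreserving_eval _ i)).const_mul _

lemma integral_sampleMean [Nonempty ι] (hf : Integrable f μ) :
    ∫ v, sampleMean f v ∂(Measure.pi fun _ : ι => μ) = ∫ x, f x ∂μ := by
  simp_rw [sampleMean]
  rw [integral_const_mul, integral_finsetSum _ fun i _ => integrable_comp_eval hf]
  simp [integral_comp_eval (μ := fun _ : ι => μ) hf.aestronglyMeasurable]

lemma variance_sampleMean (hf : MemLp f 2 μ) :
    Var[sampleMean f; Measure.pi fun _ : ι => μ] = Var[f; μ] / Fintype.card ι := by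
  have hsum := variance_sum_pi (μ := fun _ : ι => μ) (X := fun _ => f) fun _ => hf
  rw [Finset.sum_fn] at hsum
  unfold sampleMean
  rw [variance_const_mul, hsum]
  rcases isEmpty_or_nonempty ι
  · simp
  rw [Finset.sum_const, Finset.card_univ, nsmul_eq_mul]
  field_simp

lemma negMulLog_integral_sub_integral_negMulLog_sampleMean_mem_Icc [Nonempty ι]
    (hf : Measurable f) (hf01 : ∀ x, f x ∈ Set.Icc (0 : ℝ) 1) :
    negMulLog μ[f] - ∫ v, negMulLog (sampleMean f v) ∂(Measure.pi fun _ : ι => μ) ∈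
      Set.Icc (0 : ℝ) ((1 - μ[f]) / Fintype.card ι) := by
  have hfL2 : MemLp f 2 μ := memLp_of_bounded (ae_of_all _ hf01) hf.aestronglyMeasurable 2
  have hmeanL2 : MemLp (sampleMean f) 2 (Measure.pi fun _ : ι => μ) := memLp_sampleMean hfL2
  have hmean0 : 0 ≤ᵐ[Measure.pi fun _ : ι => μ] sampleMean f := ae_of_all _ fun v =>
    mul_nonneg (by positivity) (Finset.sum_nonneg fun i _ => (hf01 (v i)).1)
  have hjensen := integral_negMulLog_le_negMulLog_integral hmeanL2 hmean0
  have hgap := negMulLog_integral_sub_integral_negMulLog_le hmeanL2 hmean0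
  rw [integral_sampleMean (hfL2.integrable one_le_two)] at hjensen hgap
  refine ⟨sub_nonneg.2 hjensen, hgap.trans ?_⟩
  have hint0 : 0 ≤ μ[f] := integral_nonneg fun x => (hf01 x).1
  have hint1 : μ[f] ≤ 1 := by
    simpa using integral_mono (hfL2.integrable one_le_two) (integrable_const 1) fun x => (hf01 x).2
  have hvar : Var[f; μ] ≤ (1 - μ[f]) * μ[f] := by
    simpa using variance_le_sub_mul_sub (ae_of_all μ hf01) hf.aemeasurable
  rw [variance_sampleMean hfL2, div_right_comm]
  gcongr
  exact div_le_of_le_mul₀ hint0 (sub_nonneg.2 hint1) hvar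

end SampleMean

lemma sqrt_two_mul_mul_sq_div_mul {a b x : ℝ} (ha : 0 ≤ a) (hb : 0 < b) :
    √(2 * (b * (a / b / 2) ^ 2) * x) = a * √x / √(2 * b) := by
  rw [show 2 * (b * (a / b / 2) ^ 2) * x = a ^ 2 * x / (2 * b) by field_simp,
    sqrt_div' _ (by positivity), sqrt_mul (sq_nonneg a), sqrt_sq ha]

section Channel

variable {ι 𝒳 𝒴 : Type*} [Fintype ι] {q : 𝒳 → 𝒴 → ℝ}

/-- The probability mass function of the output of a channel with input law `μ`, where `q x y` is
the probability of the output `y` given the input `x`. -/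
noncomputable def outputPMF [MeasurableSpace 𝒳] (μ : Measure 𝒳) (q : 𝒳 → 𝒴 → ℝ) (y : 𝒴) : ℝ :=
  ∫ x, q x y ∂μ

/-- The estimate of `outputPMF` from an input sample `v`, in which the channel `q` is known and only
the input law is replaced by the uniform law on the sample. -/
noncomputable def empiricalPMF (q : 𝒳 → 𝒴 → ℝ) (v : ι → 𝒳) (y : 𝒴) : ℝ :=
  sampleMean (fun x => q x y) v

lemma empiricalPMF_sub_empiricalPMF {v w : ι → 𝒳} {i : ι} (hvw : ∀ j, j ≠ i → v j = w j) (y : 𝒴) :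
    empiricalPMF q v y - empiricalPMF q w y =
      (Fintype.card ι : ℝ)⁻¹ * (q (v i) y - q (w i) y) := by
  rw [empiricalPMF, empiricalPMF, sampleMean, sampleMean, ← mul_sub, ← Finset.sum_sub_distrib,
    Finset.sum_eq_single i (fun j _ hj => by rw [hvw j hj, sub_self]) (by simp)]

variable [Fintype 𝒴]

lemma empiricalPMF_mem_stdSimplex [Nonempty ι] (hq : ∀ x, q x ∈ stdSimplex ℝ 𝒴) (v : ι → 𝒳) :
    empiricalPMF q v ∈ stdSimplex ℝ 𝒴 := by
  refine ⟨fun y => mul_nonneg (by positivity) (Finset.sum_nonneg fun i _ => (hq (v i)).1 y), ?_⟩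
  simp_rw [empiricalPMF, sampleMean, ← Finset.mul_sum]
  rw [Finset.sum_comm]
  simp [(hq _).2]

lemma tvDist_empiricalPMF_le (hq : ∀ x, q x ∈ stdSimplex ℝ 𝒴) {v w : ι → 𝒳} {i : ι}
    (hvw : ∀ j, j ≠ i → v j = w j) :
    tvDist (empiricalPMF q v) (empiricalPMF q w) ≤ (Fintype.card ι : ℝ)⁻¹ := by
  have hcard : (0 : ℝ) ≤ (Fintype.card ι : ℝ)⁻¹ := by positivity
  calc tvDist (empiricalPMF q v) (empiricalPMF q w)
      ≤ ∑ y, (Fintype.card ι : ℝ)⁻¹ * q (v i) y := by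
        refine Finset.sum_le_sum fun y _ => ?_
        rw [empiricalPMF_sub_empiricalPMF hvw]
        exact sup_le (mul_le_mul_of_nonneg_left (sub_le_self _ ((hq _).1 y)) hcard)
          (mul_nonneg hcard ((hq _).1 y))
    _ = (Fintype.card ι : ℝ)⁻¹ := by rw [← Finset.mul_sum, (hq _).2, mul_one]

lemma hasBoundedDifferences_shannonEntropy_empiricalPMF (hq : ∀ x, q x ∈ stdSimplex ℝ 𝒴)
    (hι : 2 ≤ Fintype.card ι) :
    HasBoundedDifferences (fun v : ι → 𝒳 => shannonEntropy (empiricalPMF q v))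
      fun _ => (Fintype.card 𝒴 * log (Fintype.card ι) / Fintype.card ι).toNNReal := by
  intro i v w hvw
  have : Nonempty ι := ⟨i⟩
  exact (abs_shannonEntropy_sub_le_card_mul_log_div (empiricalPMF_mem_stdSimplex hq v)
    (empiricalPMF_mem_stdSimplex hq w) hι (tvDist_empiricalPMF_le hq hvw)).trans (le_coe_toNNReal _)

variable [MeasurableSpace 𝒳] {μ : Measure 𝒳} [IsProbabilityMeasure μ]

lemma measurable_shannonEntropy_empiricalPMF (hqm : ∀ y, Measurable fun x => q x y) :
    Measurable fun v : ι → 𝒳 => shannonEntropy (empiricalPMF q v) :=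
  Finset.measurable_sum _ fun y _ =>
    continuous_negMulLog.measurable.comp (measurable_sampleMean (hqm y))

lemma abs_shannonEntropy_outputPMF_sub_integral_le [Nonempty ι] (hq : ∀ x, q x ∈ stdSimplex ℝ 𝒴)
    (hqm : ∀ y, Measurable fun x => q x y) :
    |shannonEntropy (outputPMF μ q) -
        ∫ v, shannonEntropy (empiricalPMF q v) ∂(Measure.pi fun _ : ι => μ)| ≤
      (Fintype.card 𝒴 - 1) / Fintype.card ι := by
  have hq01 : ∀ y x, q x y ∈ Set.Icc (0 : ℝ) 1 := fun y x => mem_Icc_of_mem_stdSimplex (hq x) y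
  have hqL2 : ∀ y, MemLp (fun x => q x y) 2 μ := fun y =>
    memLp_of_bounded (ae_of_all _ (hq01 y)) (hqm y).aestronglyMeasurable 2
  have symbol_bias : ∀ y, negMulLog (outputPMF μ q y) -
      ∫ v, negMulLog (empiricalPMF q v y) ∂(Measure.pi fun _ : ι => μ) ∈
        Set.Icc 0 ((1 - outputPMF μ q y) / Fintype.card ι) := fun y =>
    negMulLog_integral_sub_integral_negMulLog_sampleMean_mem_Icc (hqm y) (hq01 y)
  have bias_eq : shannonEntropy (outputPMF μ q) -
      ∫ v, shannonEntropy (empiricalPMF q v) ∂(Measure.pi fun _ : ι => μ) =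
        ∑ y, (negMulLog (outputPMF μ q y) -
          ∫ v, negMulLog (empiricalPMF q v y) ∂(Measure.pi fun _ : ι => μ)) := by
    simp_rw [shannonEntropy]
    rw [integral_finsetSum, Finset.sum_sub_distrib]
    exact fun y _ => integrable_negMulLog (memLp_sampleMean (hqL2 y)) <| ae_of_all _ fun v =>
      (empiricalPMF_mem_stdSimplex hq v).1 y
  have output_sum : ∑ y, outputPMF μ q y = 1 := by
    simp_rw [outputPMF]
    rw [← integral_finsetSum _ fun y _ => (hqL2 y).integrable one_le_two]
    simp [(hq _).2]
  rw [bias_eq, abs_of_nonneg (Finset.sum_nonneg fun y _ => (symbol_bias y).1)]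
  refine (Finset.sum_le_sum fun y _ => (symbol_bias y).2).trans_eq ?_
  rw [← Finset.sum_div, Finset.sum_sub_distrib, output_sum]
  simp

theorem one_sub_le_measureReal_abs_shannonEntropy_sub_le (hq : ∀ x, q x ∈ stdSimplex ℝ 𝒴)
    (hqm : ∀ y, Measurable fun x => q x y) (hι : 2 ≤ Fintype.card ι) {δ : ℝ}
    (hδ : δ ∈ Set.Ioc (0 : ℝ) 2) :
    1 - δ ≤ (Measure.pi fun _ : ι => μ).real
      {v | |shannonEntropy (outputPMF μ q) - shannonEntropy (empiricalPMF q v)| ≤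
        Fintype.card 𝒴 * log (Fintype.card ι) * √(log (2 / δ)) / √(2 * Fintype.card ι) +
          (Fintype.card 𝒴 - 1) / Fintype.card ι} := by
  have : Nonempty ι := Fintype.card_pos_iff.1 (by lia)
  have hconc := one_sub_le_measureReal_abs_le
    ((hasBoundedDifferences_shannonEntropy_empiricalPMF hq hι).hasSubgaussianMGF (fun _ => μ)
      (measurable_shannonEntropy_empiricalPMF hqm)) hδ
  have hc : 0 ≤ Fintype.card 𝒴 * log (Fintype.card ι) / Fintype.card ι := by positivity
  have hradius : √(2 * (∑ _i : ι,
      ((Fintype.card 𝒴 * log (Fintype.card ι) / Fintype.card ι).toNNReal / 2) ^ 2 : NNReal) *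
        log (2 / δ)) =
      Fintype.card 𝒴 * log (Fintype.card ι) * √(log (2 / δ)) / √(2 * Fintype.card ι) := by
    rw [← sqrt_two_mul_mul_sq_div_mul (by positivity) (by positivity)]
    simp [coe_toNNReal _ hc]
  rw [hradius] at hconc
  refine hconc.trans (measureReal_mono fun v hv => ?_)
  have hbias := abs_shannonEntropy_outputPMF_sub_integral_le (ι := ι) (μ := μ) hq hqm
  rw [Set.mem_ofPred_eq, abs_sub_comm] at hv
  rw [Set.mem_ofPred_eq, add_comm]
  exact (abs_sub_le _ _ _).trans (add_le_add hbias hv)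

end Channel

/-- **Proposition 3 of the paper.** Let `Y` be a fixed probabilistic function of
`X` given by the known channel `q = p_{Y|X}`, let `H(Y)` be the entropy of the
output pmf `y ↦ ∫ q x y dμ(x)`, and let `Ĥ(v) = H(y ↦ (1/N) ∑ i, q (v i) y)` be
the empirical entropy estimate from a sample `v` of size `N ≥ 2`. Then for any
`δ ∈ (0, 1)`, with probability at least `1 - δ` over `v ∼ μ^{⊗N}`,
`|H(Y) - Ĥ(v)| ≤ card 𝒴 * log N * √(log (2/δ)) / √(2N) + (card 𝒴 - 1)/N`. -/
theorem empirical_entropy_close_to_true_entropy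
    {𝒳 : Type*} [MeasurableSpace 𝒳] (μ : Measure 𝒳) [IsProbabilityMeasure μ]
    {𝒴 : Type*} [Fintype 𝒴]
    (q : 𝒳 → 𝒴 → ℝ)
    (hq : ∀ x y, 0 ≤ q x y) (hqsum : ∀ x, ∑ y, q x y = 1)
    (hqm : ∀ y, Measurable fun x => q x y)
    (N : ℕ) (hN : 2 ≤ N)
    (HY : ℝ)
    (hHY : HY = ∑ y, -(∫ x, q x y ∂μ) * Real.log (∫ x, q x y ∂μ))
    (Hhat : (Fin N → 𝒳) → ℝ)
    (hHhat : ∀ v, Hhat v =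
      ∑ y, -((1 / (N : ℝ)) * ∑ i, q (v i) y) *
        Real.log ((1 / (N : ℝ)) * ∑ i, q (v i) y))
    (δ : ℝ) (hδ : δ ∈ Set.Ioo (0 : ℝ) 1) :
    ENNReal.ofReal (1 - δ) ≤
      (Measure.pi fun _ : Fin N => μ)
        {v | |HY - Hhat v| ≤
          (Fintype.card 𝒴 : ℝ) * Real.log N * Real.sqrt (Real.log (2 / δ)) /
              Real.sqrt (2 * N) +
            ((Fintype.card 𝒴 : ℝ) - 1) / N} := by
  have hq' : ∀ x, q x ∈ stdSimplex ℝ 𝒴 := fun x => ⟨hq x, hqsum x⟩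
  have hHY' : HY = shannonEntropy (outputPMF μ q) := by
    simp [hHY, shannonEntropy, outputPMF, Real.negMulLog]
  have hHhat' : ∀ v, Hhat v = shannonEntropy (empiricalPMF q v) := fun v => by
    simp [hHhat, shannonEntropy, empiricalPMF, sampleMean, Real.negMulLog]
  simp_rw [hHY', hHhat']
  rw [← ofReal_measureReal]
  refine ENNReal.ofReal_le_ofReal ?_
  simpa using one_sub_le_measureReal_abs_shannonEntropy_sub_le (ι := Fin N) (μ := μ) hq' hqm
    (by simpa using hN) ⟨hδ.1, by linarith [hδ.2]⟩
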